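/- Let f satisfy (f.1)–(f.3). For every ε > 0 there exists h* > 0 such that for every x₀ ∈ B(R₀) and every h ∈ (0, h*], if x(·) is the solution of the Caputo problem (^C D^α x)(t) = f(t,x(t)), x(0) = x₀, and y(·) is the solution of the approximating problem ẏ(t) = f(t, x₀ + h^{α−1}(Δ_h^{1−α} y)(t)), y(0) = 0, then ‖x(t) − x₀ − h^{α−1}(Δ_h^{1−α} y)(t)‖ ≤ ε for all t ∈ [0,T]. -/

import Mathlib

open MeasureTheory Set Real RealInnerProductSpace

noncomputable section

abbrev Evec (n : ℕ) := EuclideanSpace ℝ (Fin n)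

/-- Generalized binomial coefficient `binom a j`. -/
def binomR (a : ℝ) (j : ℕ) : ℝ :=
  (∏ i ∈ Finset.range j, (a - (i : ℝ))) / (Nat.factorial j : ℝ)

/-- Left-sided Riemann–Liouville fractional integral of order `α` with base point `0`. -/
def RLint {E : Type*} [NormedAddCommGroup E] [NormedSpace ℝ E]
    (α : ℝ) (f : ℝ → E) (t : ℝ) : E :=
  (Real.Gamma α)⁻¹ • ∫ τ in (0:ℝ)..t, ((t - τ) ^ (α - 1) : ℝ) • f τ

/-- Left-sided Riemann–Liouville fractional derivative of order `α` with base point `0`. -/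
def RLderiv {E : Type*} [NormedAddCommGroup E] [NormedSpace ℝ E]
    (α : ℝ) (x : ℝ → E) (t : ℝ) : E :=
  deriv (fun s => (Real.Gamma (1 - α))⁻¹ • ∫ τ in (0:ℝ)..s, ((s - τ) ^ (-α) : ℝ) • x τ) t

/-- Caputo fractional derivative of order `α` with base point `0`. -/
def CapDeriv {E : Type*} [NormedAddCommGroup E] [NormedSpace ℝ E]
    (α : ℝ) (x : ℝ → E) (t : ℝ) : E :=
  RLderiv α (fun s => x s - x 0) t

/-- Grünwald–Letnikov fractional difference of order `α` with step `h`. -/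
def GLdiff {E : Type*} [NormedAddCommGroup E] [NormedSpace ℝ E]
    (α h : ℝ) (x : ℝ → E) (t : ℝ) : E :=
  ∑ j ∈ Finset.range (⌊t / h⌋₊ + 1), ((-1 : ℝ) ^ j * binomR α j) • x (t - (j : ℝ) * h)

/-- The kernel `p_α`. -/
def pker (α : ℝ) (τ : ℝ) : ℝ :=
  (Real.Gamma α)⁻¹ * ∑ j ∈ Finset.range ⌈τ⌉₊, (-1 : ℝ) ^ j * binomR α j * ((τ - (j : ℝ)) ^ (α - 1) : ℝ)

/-- Mittag-Leffler function `E_α`. -/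
def mittagLeffler (α z : ℝ) : ℝ := ∑' k : ℕ, z ^ k / Real.Gamma (α * (k : ℝ) + 1)

/-- `x` is a solution of the Caputo Cauchy problem `(^C D^α x)(t) = f(t, x(t))`, `x 0 = x₀`. -/
def IsCaputoSol (α T : ℝ) {n : ℕ} (f : ℝ → Evec n → Evec n) (x₀ : Evec n)
    (x : ℝ → Evec n) : Prop :=
  (∃ φ : ℝ → Evec n, Measurable φ ∧
    (∃ C : ℝ, ∀ᵐ t ∂volume.restrict (Icc (0:ℝ) T), ‖φ t‖ ≤ C) ∧
    ∀ t ∈ Icc (0:ℝ) T, x t = x₀ + RLint α φ t) ∧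
  ∀ᵐ t ∂volume.restrict (Icc (0:ℝ) T), CapDeriv α x t = f t (x t)

/-- `y` is a solution of the approximating retarded functional-differential Cauchy problem. -/
def IsApproxSol (α T h : ℝ) {n : ℕ} (f : ℝ → Evec n → Evec n) (x₀ : Evec n)
    (y : ℝ → Evec n) : Prop :=
  (∃ Ly : NNReal, LipschitzOnWith Ly y (Icc (0:ℝ) T)) ∧ y 0 = 0 ∧
  ∀ᵐ t ∂volume.restrict (Icc (0:ℝ) T),
    HasDerivAt y (f t (x₀ + ((h ^ (α - 1) : ℝ)) • GLdiff (1 - α) h y t)) t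

/-- `x` is a motion of the conflict-controlled Caputo system for realizations `u`, `v`. -/
def IsCtrlSol (α T : ℝ) {n nu nv : ℕ}
    (g : ℝ → Evec n → Evec nu → Evec nv → Evec n) (x₀ : Evec n)
    (u : ℝ → Evec nu) (v : ℝ → Evec nv) (x : ℝ → Evec n) : Prop :=
  (∃ φ : ℝ → Evec n, Measurable φ ∧
    (∃ C : ℝ, ∀ᵐ t ∂volume.restrict (Icc (0:ℝ) T), ‖φ t‖ ≤ C) ∧
    ∀ t ∈ Icc (0:ℝ) T, x t = x₀ + RLint α φ t) ∧
  ∀ᵐ t ∂volume.restrict (Icc (0:ℝ) T), CapDeriv α x t = g t (x t) (u t) (v t)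

/-- `y` is a motion of the approximating conflict-controlled system for realizations `ũ`, `ṽ`. -/
def IsCtrlApproxSol (α T h : ℝ) {n nu nv : ℕ}
    (g : ℝ → Evec n → Evec nu → Evec nv → Evec n) (x₀ : Evec n)
    (ut : ℝ → Evec nu) (vt : ℝ → Evec nv) (y : ℝ → Evec n) : Prop :=
  (∃ Ly : NNReal, LipschitzOnWith Ly y (Icc (0:ℝ) T)) ∧ y 0 = 0 ∧
  ∀ᵐ t ∂volume.restrict (Icc (0:ℝ) T),
    HasDerivAt y (g t (x₀ + ((h ^ (α - 1) : ℝ)) • GLdiff (1 - α) h y t) (ut t) (vt t)) t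

/-!
Both `x` and `z = x₀ + h ^ (α - 1) Δ_h^{1 - α} y` solve a Volterra equation
`v t = x₀ + ∫₀ᵗ q (t - τ) f (τ, v τ) dτ`. For `x` the kernel is `s ^ (α - 1) / Γ(α)`. For `z` it is
`h ^ (α - 1)` times a partial sum, up to index `⌊s / h⌋`, of the Grünwald–Letnikov weights; that sum
equals `Γ(m + α) / (Γ(α) m!)`, which Gautschi's inequality compares with `m ^ (α - 1) / Γ(α)`. Hence
both kernels are `O(s ^ (α - 1))` uniformly in `h`, and for `0 < β ≤ α` they differ by
`O(h ^ (α - β) s ^ (β - 1))`. Under such a bound convolution contracts in the norm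
`sup |v t| exp (-k t)` for large `k`, so solutions depend continuously on the kernel, and
`‖x - z‖ = O(h ^ (α - β))`.
-/

section GrunwaldWeights

lemma rpow_floor_le {u c : ℝ} (hu : 1 ≤ u) (hc : c ≤ 0) :
    (⌊u⌋₊ : ℝ) ^ c ≤ 2 ^ (-c) * u ^ c := by
  have hfloor : (1 : ℝ) ≤ ⌊u⌋₊ := by exact_mod_cast (Nat.one_le_floor_iff u).2 hu
  calc (⌊u⌋₊ : ℝ) ^ c ≤ (u / 2) ^ c :=
        rpow_le_rpow_of_nonpos (by positivity) (by linarith [Nat.lt_floor_add_one u]) hc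
    _ = 2 ^ (-c) * u ^ c := by
        rw [div_rpow (by positivity) zero_le_two, rpow_neg zero_le_two]
        field_simp

lemma rpow_sub_add_one_rpow_le {x a : ℝ} (hx : 0 < x) (ha : 0 ≤ a) :
    x ^ (a - 1) - (x + 1) ^ (a - 1) ≤ x ^ (a - 2) := by
  have hx1 : 0 < x + 1 := by positivity
  calc x ^ (a - 1) - (x + 1) ^ (a - 1) = x ^ a / x - (x + 1) ^ a / (x + 1) := by
        rw [rpow_sub_one hx.ne', rpow_sub_one hx1.ne']
    _ ≤ x ^ a / x - x ^ a / (x + 1) := by gcongr; linarith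
    _ = x ^ a / (x * (x + 1)) := by field_simp; ring
    _ ≤ x ^ a / x ^ 2 := by gcongr; nlinarith
    _ = x ^ (a - 2) := by rw [rpow_sub hx, rpow_two]

lemma binomR_succ (a : ℝ) (m : ℕ) :
    binomR a (m + 1) = binomR a m * (a - m) / (m + 1) := by
  rw [binomR, binomR, Finset.prod_range_succ, Nat.factorial_succ]
  push_cast
  field_simp

lemma binomR_add_one_succ (a : ℝ) (m : ℕ) :
    binomR (a + 1) (m + 1) = binomR a m + binomR a (m + 1) := by
  have shift : ∏ i ∈ Finset.range (m + 1), (a + 1 - (i : ℝ))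
      = (∏ i ∈ Finset.range m, (a - (i : ℝ))) * (a + 1) := by
    rw [Finset.prod_range_succ', Nat.cast_zero, sub_zero]
    congr 1
    exact Finset.prod_congr rfl fun i _ ↦ by push_cast; ring
  rw [binomR_succ a, binomR, binomR, shift, Nat.factorial_succ]
  push_cast
  field_simp
  ring

lemma sum_neg_one_pow_mul_binomR_add_one (a : ℝ) (m : ℕ) :
    ∑ j ∈ Finset.range (m + 1), (-1 : ℝ) ^ j * binomR (a + 1) j = (-1) ^ m * binomR a m := by
  induction m with
  | zero => simp [binomR]
  | succ m ih => rw [Finset.sum_range_succ, ih, binomR_add_one_succ]; ring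

lemma Gamma_mul_neg_one_pow_mul_binomR_neg {a : ℝ} (ha : 0 < a) (m : ℕ) :
    Gamma a * ((-1) ^ m * binomR (-a) m) = Gamma (m + a) / Gamma (m + 1) := by
  rw [Gamma_nat_eq_factorial]
  induction m with
  | zero => simp [binomR]
  | succ m ih =>
    have hma : (m : ℝ) + a ≠ 0 := by positivity
    rw [show ((m + 1 : ℕ) : ℝ) + a = m + a + 1 by push_cast; ring, Gamma_add_one hma,
      Nat.factorial_succ, binomR_succ]
    calc Gamma a * ((-1) ^ (m + 1) * (binomR (-a) m * (-a - m) / (m + 1)))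
        = Gamma a * ((-1) ^ m * binomR (-a) m) * ((m + a) / (m + 1)) := by ring
      _ = (m + a) * Gamma (m + a) / (((m + 1) * m.factorial : ℕ) : ℝ) := by
        rw [ih]
        push_cast
        field_simp

/-- The sum of the first `m + 1` Grünwald–Letnikov weights of order `1 - α`. -/
def glPartialSum (α : ℝ) (m : ℕ) : ℝ :=
  ∑ j ∈ Finset.range (m + 1), (-1 : ℝ) ^ j * binomR (1 - α) j

lemma glPartialSum_zero (α : ℝ) : glPartialSum α 0 = 1 := by simp [glPartialSum, binomR]

lemma Gamma_mul_glPartialSum {α : ℝ} (hα : 0 < α) (m : ℕ) :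
    Gamma α * glPartialSum α m = Gamma (m + α) / Gamma (m + 1) := by
  rw [glPartialSum, show 1 - α = -α + 1 by ring, sum_neg_one_pow_mul_binomR_add_one,
    Gamma_mul_neg_one_pow_mul_binomR_neg hα]

-- One half of Gautschi's inequality, by log-convexity of `Gamma`.
lemma Gamma_add_le_rpow_mul_Gamma {x a : ℝ} (hx : 0 < x) (ha : a ∈ Ioo (0 : ℝ) 1) :
    Gamma (x + a) ≤ x ^ a * Gamma x := by
  have hΓ : 0 < Gamma x := Gamma_pos_of_pos hx
  calc Gamma (x + a) = Gamma ((1 - a) * x + a * (x + 1)) := by ring_nf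
    _ ≤ Gamma x ^ (1 - a) * Gamma (x + 1) ^ a :=
      Gamma_mul_add_mul_le_rpow_Gamma_mul_rpow_Gamma hx (by positivity)
        (sub_pos.2 ha.2) ha.1 (sub_add_cancel 1 a)
    _ = x ^ a * (Gamma x ^ (1 - a) * Gamma x ^ a) := by
      rw [Gamma_add_one hx.ne', mul_rpow hx.le hΓ.le]
      ring
    _ = x ^ a * Gamma x := by rw [← rpow_add hΓ, sub_add_cancel, rpow_one]

lemma Gamma_mul_glPartialSum_le {α : ℝ} (hα : α ∈ Ioo (0 : ℝ) 1) {m : ℕ} (hm : 0 < m) :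
    Gamma α * glPartialSum α m ≤ (m : ℝ) ^ (α - 1) := by
  have hm' : (0 : ℝ) < m := by exact_mod_cast hm
  rw [Gamma_mul_glPartialSum hα.1, div_le_iff₀ (Gamma_pos_of_pos (by positivity)),
    Gamma_add_one hm'.ne', ← mul_assoc, rpow_sub_one hm'.ne', div_mul_cancel₀ _ hm'.ne']
  exact Gamma_add_le_rpow_mul_Gamma hm' hα

lemma le_Gamma_mul_glPartialSum {α : ℝ} (hα : α ∈ Ioo (0 : ℝ) 1) (m : ℕ) :
    ((m : ℝ) + 1) ^ (α - 1) ≤ Gamma α * glPartialSum α m := by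
  have hα0 := hα.1
  have hm : (0 : ℝ) < m + α := by positivity
  have gautschi : Gamma (m + 1) ≤ ((m : ℝ) + α) ^ (1 - α) * Gamma (m + α) := by
    have := Gamma_add_le_rpow_mul_Gamma hm (a := 1 - α) ⟨by linarith [hα.2], by linarith⟩
    rwa [show (m : ℝ) + α + (1 - α) = m + 1 by ring] at this
  rw [Gamma_mul_glPartialSum hα0, le_div_iff₀ (Gamma_pos_of_pos (by positivity))]
  calc ((m : ℝ) + 1) ^ (α - 1) * Gamma (m + 1)
      ≤ ((m : ℝ) + 1) ^ (α - 1) * (((m : ℝ) + 1) ^ (1 - α) * Gamma (m + α)) := by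
        have h1α : 0 ≤ 1 - α := by linarith [hα.2]
        have hle : (m : ℝ) + α ≤ m + 1 := by linarith [hα.2]
        gcongr
        exact gautschi.trans (by gcongr)
    _ = Gamma (m + α) := by
        rw [← mul_assoc, ← rpow_add (by positivity)]
        simp

lemma abs_Gamma_mul_glPartialSum_floor_le {α : ℝ} (hα : α ∈ Ioo (0 : ℝ) 1) {u : ℝ} (hu : 0 < u) :
    |Gamma α * glPartialSum α ⌊u⌋₊| ≤ (Gamma α + 2) * u ^ (α - 1) := by
  have hΓ := Gamma_pos_of_pos hα.1
  have hα1 : α - 1 ≤ 0 := by linarith [hα.2]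
  rw [abs_of_nonneg (le_trans (by positivity) (le_Gamma_mul_glPartialSum hα _))]
  rcases lt_or_ge u 1 with hu1 | hu1
  · have hpow : 1 ≤ u ^ (α - 1) := one_le_rpow_of_pos_of_le_one_of_nonpos hu hu1.le hα1
    rw [Nat.floor_eq_zero.2 hu1, glPartialSum_zero, mul_one]
    nlinarith
  · have htwo : (2 : ℝ) ^ (-(α - 1)) ≤ 2 := rpow_le_self_of_one_le one_le_two (by linarith [hα.1])
    calc Gamma α * glPartialSum α ⌊u⌋₊ ≤ (⌊u⌋₊ : ℝ) ^ (α - 1) :=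
          Gamma_mul_glPartialSum_le hα (Nat.floor_pos.2 hu1)
      _ ≤ 2 ^ (-(α - 1)) * u ^ (α - 1) := rpow_floor_le hu1 hα1
      _ ≤ (Gamma α + 2) * u ^ (α - 1) := by gcongr; linarith

lemma abs_rpow_sub_Gamma_mul_glPartialSum_floor_le_of_one_le {α u : ℝ} (hα : α ∈ Ioo (0 : ℝ) 1)
    (hu : 1 ≤ u) : |u ^ (α - 1) - Gamma α * glPartialSum α ⌊u⌋₊| ≤ 4 * u ^ (α - 2) := by
  have hα1 : α - 1 ≤ 0 := by linarith [hα.2]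
  have hu0 : 0 < u := by linarith
  have hfloor : 0 < ⌊u⌋₊ := Nat.floor_pos.2 hu
  have hfloor' : (0 : ℝ) < ⌊u⌋₊ := by exact_mod_cast hfloor
  have hpow_le : u ^ (α - 1) ≤ (⌊u⌋₊ : ℝ) ^ (α - 1) :=
    rpow_le_rpow_of_nonpos hfloor' (Nat.floor_le hu0.le) hα1
  have hle_pow : ((⌊u⌋₊ : ℝ) + 1) ^ (α - 1) ≤ u ^ (α - 1) :=
    rpow_le_rpow_of_nonpos hu0 (Nat.lt_floor_add_one u).le hα1
  have hsum_le := Gamma_mul_glPartialSum_le hα hfloor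
  have hle_sum := le_Gamma_mul_glPartialSum hα ⌊u⌋₊
  have hfour : (2 : ℝ) ^ (-(α - 2)) ≤ 4 :=
    calc (2 : ℝ) ^ (-(α - 2)) ≤ 2 ^ (2 : ℝ) :=
          rpow_le_rpow_of_exponent_le one_le_two (by linarith [hα.1])
      _ = 4 := by norm_num
  calc |u ^ (α - 1) - Gamma α * glPartialSum α ⌊u⌋₊|
      ≤ (⌊u⌋₊ : ℝ) ^ (α - 1) - ((⌊u⌋₊ : ℝ) + 1) ^ (α - 1) :=
        abs_le.2 ⟨by linarith, by linarith⟩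
    _ ≤ (⌊u⌋₊ : ℝ) ^ (α - 2) := rpow_sub_add_one_rpow_le hfloor' hα.1.le
    _ ≤ 2 ^ (-(α - 2)) * u ^ (α - 2) := rpow_floor_le hu (by linarith [hα.2])
    _ ≤ 4 * u ^ (α - 2) := by gcongr

lemma abs_rpow_sub_Gamma_mul_glPartialSum_floor_le {α β u : ℝ} (hα : α ∈ Ioo (0 : ℝ) 1)
    (hβ : β ∈ Icc 0 α) (hu : 0 < u) :
    |u ^ (α - 1) - Gamma α * glPartialSum α ⌊u⌋₊| ≤ (Gamma α + 4) * u ^ (β - 1) := by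
  have hΓ := Gamma_pos_of_pos hα.1
  rcases lt_or_ge u 1 with hu1 | hu1
  · have hone : 1 ≤ u ^ (β - 1) :=
      one_le_rpow_of_pos_of_le_one_of_nonpos hu hu1.le (by linarith [hα.2, hβ.2])
    have hpow : u ^ (α - 1) ≤ u ^ (β - 1) :=
      rpow_le_rpow_of_exponent_ge hu hu1.le (by linarith [hβ.2])
    have hpos : 0 ≤ u ^ (α - 1) := by positivity
    rw [Nat.floor_eq_zero.2 hu1, glPartialSum_zero, mul_one]
    exact abs_le.2 ⟨by nlinarith, by nlinarith⟩
  · calc |u ^ (α - 1) - Gamma α * glPartialSum α ⌊u⌋₊| ≤ 4 * u ^ (α - 2) :=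
          abs_rpow_sub_Gamma_mul_glPartialSum_floor_le_of_one_le hα hu1
      _ ≤ 4 * u ^ (β - 1) := by
          gcongr 4 * ?_
          exact rpow_le_rpow_of_exponent_le hu1 (by linarith [hα.2, hβ.1])
      _ ≤ (Gamma α + 4) * u ^ (β - 1) := by gcongr; linarith

end GrunwaldWeights

section Kernels

/-- The power bound `|q s| ≤ B s ^ (a - 1)` on `(0, ∞)`, which for `0 < a` makes the kernel `q`
weakly singular. Nothing is asked at `s = 0`, where the Grünwald–Letnikov kernel is not `0`. -/
def HasPowerBound (q : ℝ → ℝ) (B a : ℝ) : Prop :=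
  ∀ ⦃s : ℝ⦄, 0 < s → |q s| ≤ B * s ^ (a - 1)

/-- The kernel of the Riemann–Liouville integral of order `α`. -/
def rlKernel (α s : ℝ) : ℝ := (Gamma α)⁻¹ * s ^ (α - 1)

/-- The kernel against which `h ^ (α - 1) Δ_h^{1 - α}` integrates the derivative of a function
vanishing at `0`. -/
def glKernel (α h s : ℝ) : ℝ := h ^ (α - 1) * glPartialSum α ⌊s / h⌋₊

lemma measurable_rlKernel (α : ℝ) : Measurable (rlKernel α) := by
  unfold rlKernel
  fun_prop

lemma measurable_glKernel (α h : ℝ) : Measurable (glKernel α h) :=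
  ((measurable_from_nat (f := glPartialSum α)).comp
    (Nat.measurable_floor.comp (measurable_id.div_const h))).const_mul _

lemma HasPowerBound.mono {q : ℝ → ℝ} {B B' a : ℝ} (hq : HasPowerBound q B a) (hB : B ≤ B') :
    HasPowerBound q B' a := fun _ hs ↦ (hq hs).trans (by gcongr)

lemma hasPowerBound_rlKernel {α : ℝ} (hα : 0 < α) :
    HasPowerBound (rlKernel α) (Gamma α)⁻¹ α := fun s hs ↦ by
  have := Gamma_pos_of_pos hα
  rw [rlKernel, abs_of_nonneg (by positivity)]

lemma hasPowerBound_glKernel {α h : ℝ} (hα : α ∈ Ioo (0 : ℝ) 1) (hh : 0 < h) :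
    HasPowerBound (glKernel α h) ((Gamma α + 2) / Gamma α) α := fun s hs ↦ by
  have hΓ := Gamma_pos_of_pos hα.1
  have scale : glKernel α h s
      = h ^ (α - 1) / Gamma α * (Gamma α * glPartialSum α ⌊s / h⌋₊) := by
    rw [glKernel]
    field_simp
  rw [scale, abs_mul, abs_of_pos (by positivity)]
  calc h ^ (α - 1) / Gamma α * |Gamma α * glPartialSum α ⌊s / h⌋₊|
      ≤ h ^ (α - 1) / Gamma α * ((Gamma α + 2) * (s / h) ^ (α - 1)) := by
        gcongr
        exact abs_Gamma_mul_glPartialSum_floor_le hα (div_pos hs hh)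
    _ = (Gamma α + 2) / Gamma α * s ^ (α - 1) := by
        rw [div_rpow hs.le hh.le]
        field_simp

lemma hasPowerBound_rlKernel_sub_glKernel {α β h : ℝ} (hα : α ∈ Ioo (0 : ℝ) 1)
    (hβ : β ∈ Icc 0 α) (hh : 0 < h) :
    HasPowerBound (rlKernel α - glKernel α h) ((Gamma α + 4) / Gamma α * h ^ (α - β)) β :=
  fun s hs ↦ by
  have hΓ := Gamma_pos_of_pos hα.1
  have scale : (rlKernel α - glKernel α h) s
      = h ^ (α - 1) / Gamma α * ((s / h) ^ (α - 1) - Gamma α * glPartialSum α ⌊s / h⌋₊) := by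
    rw [Pi.sub_apply, rlKernel, glKernel, div_rpow hs.le hh.le]
    field_simp
  rw [scale, abs_mul, abs_of_pos (by positivity)]
  calc h ^ (α - 1) / Gamma α * |(s / h) ^ (α - 1) - Gamma α * glPartialSum α ⌊s / h⌋₊|
      ≤ h ^ (α - 1) / Gamma α * ((Gamma α + 4) * (s / h) ^ (β - 1)) := by
        gcongr
        exact abs_rpow_sub_Gamma_mul_glPartialSum_floor_le hα hβ (div_pos hs hh)
    _ = (Gamma α + 4) / Gamma α * h ^ (α - β) * s ^ (β - 1) := by
        rw [show α - β = α - 1 - (β - 1) by ring, rpow_sub hh (α - 1), div_rpow hs.le hh.le]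
        field_simp

end Kernels

section Volterra

variable {E : Type*} [NormedAddCommGroup E] [NormedSpace ℝ E]

/-- The Volterra convolution of the scalar kernel `q` with `w`, based at `0`. -/
def volterra (q : ℝ → ℝ) (w : ℝ → E) (t : ℝ) : E := ∫ τ in (0 : ℝ)..t, q (t - τ) • w τ

lemma RLint_eq_volterra (α : ℝ) (φ : ℝ → E) : RLint α φ = volterra (rlKernel α) φ := by
  ext1 t
  simp only [RLint, volterra, rlKernel, mul_smul, intervalIntegral.integral_smul]

lemma intervalIntegrable_sub_rpow {a : ℝ} (ha : 0 < a) (t : ℝ) :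
    IntervalIntegrable (fun τ ↦ (t - τ) ^ (a - 1)) volume 0 t := by
  simpa using ((intervalIntegral.intervalIntegrable_rpow' (a := 0) (b := t)
    (by linarith : -1 < a - 1)).comp_sub_left t).symm

lemma integral_sub_rpow {a : ℝ} (ha : 0 < a) (t : ℝ) :
    ∫ τ in (0 : ℝ)..t, (t - τ) ^ (a - 1) = t ^ a / a := by
  rw [intervalIntegral.integral_comp_sub_left (fun u ↦ u ^ (a - 1)) t,
    integral_rpow (.inl (by linarith))]
  simp [zero_rpow ha.ne']

lemma integral_sub_rpow_mul_exp_le {a k t : ℝ} (ha : 0 < a) (hk : 0 < k) (ht : 0 ≤ t) :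
    ∫ τ in (0 : ℝ)..t, (t - τ) ^ (a - 1) * exp (k * τ) ≤ (1 / k) ^ a * Gamma a * exp (k * t) := by
  have reflect (τ : ℝ) : (t - τ) ^ (a - 1) * exp (k * τ)
      = (t - τ) ^ (a - 1) * exp (-(k * (t - τ))) * exp (k * t) := by
    rw [mul_assoc, ← exp_add]
    ring_nf
  have integrable : IntegrableOn (fun u ↦ u ^ (a - 1) * exp (-(k * u))) (Ioi 0) := by
    simpa using integrableOn_rpow_mul_exp_neg_mul_rpow (p := 1) (s := a - 1) (by linarith)
      one_pos hk
  simp only [reflect]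
  rw [intervalIntegral.integral_mul_const,
    intervalIntegral.integral_comp_sub_left (fun u ↦ u ^ (a - 1) * exp (-(k * u))) t, sub_self,
    sub_zero, intervalIntegral.integral_of_le ht, ← integral_rpow_mul_exp_neg_mul_Ioi ha hk]
  refine mul_le_mul_of_nonneg_right
    (setIntegral_mono_set integrable ?_ Ioc_subset_Ioi_self.eventuallyLE) (exp_pos _).le
  filter_upwards [ae_restrict_mem measurableSet_Ioi] with u (hu : 0 < u)
  simp only [Pi.zero_apply]
  positivity

namespace HasPowerBound

variable {q : ℝ → ℝ} {B a t : ℝ} {w : ℝ → E}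

lemma nonneg (hq : HasPowerBound q B a) : 0 ≤ B := by
  simpa using (abs_nonneg _).trans (hq one_pos)

lemma intervalIntegrable (hq : HasPowerBound q B a) (hqm : Measurable q) (ha : 0 < a)
    (ht : 0 ≤ t) : IntervalIntegrable (fun τ ↦ q (t - τ)) volume 0 t := by
  have hpow := intervalIntegrable_sub_rpow ha t
  rw [intervalIntegrable_iff_integrableOn_Ioo_of_le ht] at hpow ⊢
  refine (hpow.const_mul B).mono' (hqm.comp (by fun_prop)).aestronglyMeasurable ?_
  filter_upwards [ae_restrict_mem measurableSet_Ioo] with τ hτ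
  exact hq (sub_pos.2 hτ.2)

lemma intervalIntegrable_smul (hq : HasPowerBound q B a) (hqm : Measurable q) (ha : 0 < a)
    (ht : 0 ≤ t) (hw : MemLp w ⊤ (volume.restrict (Icc 0 t))) :
    IntervalIntegrable (fun τ ↦ q (t - τ) • w τ) volume 0 t := by
  have hqi := hq.intervalIntegrable hqm ha ht
  rw [intervalIntegrable_iff_integrableOn_Icc_of_le ht] at hqi ⊢
  exact hqi.smul_of_top_left hw

lemma norm_volterra_le (hq : HasPowerBound q B a) (ht : 0 ≤ t) {b : ℝ → ℝ}
    (hw : ∀ᵐ τ ∂volume.restrict (Icc 0 t), ‖w τ‖ ≤ b τ)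
    (hb : IntervalIntegrable (fun τ ↦ (t - τ) ^ (a - 1) * b τ) volume 0 t) :
    ‖volterra q w t‖ ≤ B * ∫ τ in (0 : ℝ)..t, (t - τ) ^ (a - 1) * b τ := by
  rw [← intervalIntegral.integral_const_mul]
  refine intervalIntegral.norm_integral_le_of_norm_le ht ?_ (hb.const_mul B)
  rw [← ae_restrict_iff' measurableSet_Ioc, ← restrict_Ioo_eq_restrict_Ioc]
  filter_upwards [ae_restrict_of_ae_restrict_of_subset Ioo_subset_Icc_self hw,
    ae_restrict_mem measurableSet_Ioo] with τ hwτ hτ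
  have hqτ := hq (sub_pos.2 hτ.2)
  rw [norm_smul, norm_eq_abs, ← mul_assoc]
  exact mul_le_mul hqτ hwτ (norm_nonneg _) ((abs_nonneg _).trans hqτ)

lemma norm_volterra_le_of_ae_norm_le (hq : HasPowerBound q B a) (ha : 0 < a) (ht : 0 ≤ t)
    {C : ℝ} (hw : ∀ᵐ τ ∂volume.restrict (Icc 0 t), ‖w τ‖ ≤ C) :
    ‖volterra q w t‖ ≤ B * (t ^ a / a * C) := by
  have := hq.norm_volterra_le ht hw ((intervalIntegrable_sub_rpow ha t).mul_const C)
  rwa [intervalIntegral.integral_mul_const, integral_sub_rpow ha] at this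

lemma norm_volterra_le_of_ae_norm_le_exp (hq : HasPowerBound q B a) (ha : 0 < a) (ht : 0 ≤ t)
    {S k : ℝ} (hS : 0 ≤ S) (hk : 0 < k)
    (hw : ∀ᵐ τ ∂volume.restrict (Icc 0 t), ‖w τ‖ ≤ exp (k * τ) * S) :
    ‖volterra q w t‖ ≤ B * ((1 / k) ^ a * Gamma a * exp (k * t) * S) := by
  refine (hq.norm_volterra_le ht hw
    ((intervalIntegrable_sub_rpow ha t).mul_continuousOn (by fun_prop))).trans ?_
  refine mul_le_mul_of_nonneg_left ?_ hq.nonneg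
  simp only [← mul_assoc ((t - _) ^ (a - 1)), intervalIntegral.integral_mul_const]
  exact mul_le_mul_of_nonneg_right (integral_sub_rpow_mul_exp_le ha hk ht) hS

end HasPowerBound

-- In the weighted norm `sup g(t) exp(-kt)` the hypothesis reads `S ≤ A + S / 2`.
lemma le_two_mul_exp_of_bootstrap {g : ℝ → ℝ} {A k T : ℝ} (hk : 0 ≤ k) (hA : 0 ≤ A)
    (hg0 : ∀ t ∈ Icc 0 T, 0 ≤ g t) (hg : BddAbove (g '' Icc 0 T))
    (bootstrap : ∀ S, 0 ≤ S → (∀ t ∈ Icc 0 T, g t ≤ exp (k * t) * S) →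
      ∀ t ∈ Icc 0 T, g t ≤ A + exp (k * t) * S / 2) {t : ℝ} (ht : t ∈ Icc 0 T) :
    g t ≤ 2 * exp (k * T) * A := by
  set S := sSup ((fun s ↦ g s / exp (k * s)) '' Icc 0 T)
  have one_le_exp {s : ℝ} (hs : s ∈ Icc 0 T) : 1 ≤ exp (k * s) :=
    Real.one_le_exp (mul_nonneg hk hs.1)
  have hbdd : BddAbove ((fun s ↦ g s / exp (k * s)) '' Icc 0 T) := by
    obtain ⟨G, hG⟩ := hg
    refine ⟨G, forall_mem_image.2 fun s hs ↦ ?_⟩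
    exact (div_le_self (hg0 s hs) (one_le_exp hs)).trans (hG (mem_image_of_mem g hs))
  have le_S {s : ℝ} (hs : s ∈ Icc 0 T) : g s ≤ exp (k * s) * S := by
    rw [← div_le_iff₀' (exp_pos _)]
    exact le_csSup hbdd (mem_image_of_mem _ hs)
  have hS0 : 0 ≤ S := (div_nonneg (hg0 t ht) (exp_pos _).le).trans
    (le_csSup hbdd (mem_image_of_mem _ ht))
  have hS : S ≤ A + S / 2 := by
    refine csSup_le (nonempty_of_mem ht |>.image _) (forall_mem_image.2 fun s hs ↦ ?_)
    rw [div_le_iff₀ (exp_pos _)]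
    nlinarith [bootstrap S hS0 (fun _ ↦ le_S) s hs, one_le_exp hs]
  calc g t ≤ exp (k * t) * S := le_S ht
    _ ≤ exp (k * T) * (2 * A) := by
        gcongr
        · exact ht.2
        · linarith
    _ = 2 * exp (k * T) * A := by ring

lemma exists_pos_mul_one_div_rpow_eq_half {a c : ℝ} (ha : 0 < a) (hc : 0 < c) :
    ∃ k > 0, c * (1 / k) ^ a = 1 / 2 := by
  refine ⟨(2 * c) ^ (1 / a), by positivity, ?_⟩
  rw [one_div ((2 * c) ^ (1 / a)), inv_rpow (by positivity), ← rpow_mul (by positivity),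
    one_div_mul_cancel ha.ne', rpow_one]
  field_simp

theorem exists_volterra_gronwall_const {a B L : ℝ} (T : ℝ) (ha : 0 < a) (hB : 0 < B)
    (hL : 0 < L) :
    ∃ M > 0, ∀ (q : ℝ → ℝ) (w : ℝ → E) (g : ℝ → ℝ) (A C : ℝ), HasPowerBound q B a → 0 ≤ A →
      (∀ᵐ t ∂volume.restrict (Icc 0 T), ‖w t‖ ≤ C) →
      (∀ᵐ t ∂volume.restrict (Icc 0 T), ‖w t‖ ≤ L * g t) →
      (∀ t ∈ Icc 0 T, 0 ≤ g t) → (∀ t ∈ Icc 0 T, g t ≤ A + ‖volterra q w t‖) →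
      ∀ t ∈ Icc 0 T, g t ≤ M * A := by
  obtain ⟨k, hk, hk_half⟩ := exists_pos_mul_one_div_rpow_eq_half ha
    (by positivity : 0 < B * Gamma a * L)
  refine ⟨2 * exp (k * T), by positivity, fun q w g A C hq hA hwC hwg hg0 hg t ht ↦ ?_⟩
  refine le_two_mul_exp_of_bootstrap hk.le hA hg0 ?_ (fun S hS hgS s hs ↦ ?_) ht
  · refine ⟨A + B * (T ^ a / a * |C|), forall_mem_image.2 fun s hs ↦ (hg s hs).trans ?_⟩
    have hwC' : ∀ᵐ τ ∂volume.restrict (Icc 0 s), ‖w τ‖ ≤ |C| :=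
      (ae_restrict_of_ae_restrict_of_subset (Icc_subset_Icc_right hs.2) hwC).mono
        fun τ h ↦ h.trans (le_abs_self C)
    have hs0 := hs.1
    have hsT := hs.2
    grw [hq.norm_volterra_le_of_ae_norm_le ha hs0 hwC', hsT]
  · have hwS : ∀ᵐ τ ∂volume.restrict (Icc 0 s), ‖w τ‖ ≤ exp (k * τ) * (L * S) := by
      filter_upwards [ae_restrict_of_ae_restrict_of_subset (Icc_subset_Icc_right hs.2) hwg,
        ae_restrict_mem measurableSet_Icc] with τ hwτ hτ
      calc ‖w τ‖ ≤ L * g τ := hwτ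
        _ ≤ L * (exp (k * τ) * S) := by gcongr; exact hgS τ ⟨hτ.1, hτ.2.trans hs.2⟩
        _ = exp (k * τ) * (L * S) := by ring
    calc g s ≤ A + ‖volterra q w s‖ := hg s hs
      _ ≤ A + B * ((1 / k) ^ a * Gamma a * exp (k * s) * (L * S)) := by
          gcongr
          exact hq.norm_volterra_le_of_ae_norm_le_exp ha hs.1 (by positivity) hk hwS
      _ = A + B * Gamma a * L * (1 / k) ^ a * (exp (k * s) * S) := by ring
      _ = A + exp (k * s) * S / 2 := by rw [hk_half]; ring

end Volterra

section VolterraEquation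

lemma memLp_restrict_Icc_of_le {E : Type*} [NormedAddCommGroup E] {w : ℝ → E} {t T : ℝ}
    (hw : MemLp w ⊤ (volume.restrict (Icc 0 T))) (htT : t ≤ T) :
    MemLp w ⊤ (volume.restrict (Icc 0 t)) :=
  hw.mono_measure (Measure.restrict_mono (Icc_subset_Icc_right htT) le_rfl)

variable {E : Type*} [NormedAddCommGroup E] [NormedSpace ℝ E]

/-- `v` solves the Volterra equation `v t = x₀ + ∫₀ᵗ q (t - τ) f (τ, v τ) dτ` on `[0, T]`. The
integrand is carried by an essentially bounded `w` that agrees almost everywhere with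
`τ ↦ f τ (v τ)`. -/
def IsVolterraSol (q : ℝ → ℝ) (T : ℝ) (f : ℝ → E → E) (x₀ : E) (v : ℝ → E) : Prop :=
  ∃ w : ℝ → E, MemLp w ⊤ (volume.restrict (Icc 0 T)) ∧
    (∀ᵐ t ∂volume.restrict (Icc 0 T), w t = f t (v t)) ∧
    ∀ t ∈ Icc 0 T, v t = x₀ + volterra q w t

theorem exists_volterraSol_bound {α B T cf : ℝ} (hα : 0 < α) (hB : 0 < B) (hcf : 0 < cf)
    {f : ℝ → E → E} (hf : ∀ t ∈ Icc 0 T, ∀ x, ‖f t x‖ ≤ (1 + ‖x‖) * cf) :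
    ∃ M > 0, ∀ (q : ℝ → ℝ) (x₀ : E) (v : ℝ → E), HasPowerBound q B α →
      IsVolterraSol q T f x₀ v → ∀ t ∈ Icc 0 T, 1 + ‖v t‖ ≤ M * (1 + ‖x₀‖) := by
  obtain ⟨M, hM, gronwall⟩ := exists_volterra_gronwall_const (E := E) T hα hB hcf
  refine ⟨M, hM, fun q x₀ v hq ⟨w, hw, hwf, hv⟩ ↦ ?_⟩
  refine gronwall q w (fun t ↦ 1 + ‖v t‖) (1 + ‖x₀‖) _ hq (by positivity)
    (ae_le_lpNorm_exponent_top hw) ?_ (fun t _ ↦ by positivity) fun t ht ↦ ?_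
  · filter_upwards [hwf, ae_restrict_mem measurableSet_Icc] with t hwt ht
    rw [hwt, mul_comm]
    exact hf t ht _
  · grw [hv t ht, norm_add_le, add_assoc]

lemma volterra_sub_volterra {p q : ℝ → ℝ} {Bp Bq a t : ℝ} {φ ψ : ℝ → E} (ha : 0 < a)
    (ht : 0 ≤ t) (hpm : Measurable p) (hqm : Measurable q) (hp : HasPowerBound p Bp a)
    (hq : HasPowerBound q Bq a) (hφ : MemLp φ ⊤ (volume.restrict (Icc 0 t)))
    (hψ : MemLp ψ ⊤ (volume.restrict (Icc 0 t))) :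
    volterra p φ t - volterra q ψ t = volterra p (φ - ψ) t + volterra (p - q) ψ t := by
  have hpφ := hp.intervalIntegrable_smul hpm ha ht hφ
  have hpψ := hp.intervalIntegrable_smul hpm ha ht hψ
  have hqψ := hq.intervalIntegrable_smul hqm ha ht hψ
  simp only [volterra, Pi.sub_apply, smul_sub, sub_smul]
  rw [intervalIntegral.integral_sub hpφ hpψ, intervalIntegral.integral_sub hpψ hqψ]
  abel

lemma norm_volterra_sub_volterra_le {p q : ℝ → ℝ} {Bp Bq a δ β t T K : ℝ} {φ ψ : ℝ → E}
    (ha : 0 < a) (hβ : 0 < β) (hpm : Measurable p) (hqm : Measurable q)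
    (hp : HasPowerBound p Bp a) (hq : HasPowerBound q Bq a) (hpq : HasPowerBound (p - q) δ β)
    (hφ : MemLp φ ⊤ (volume.restrict (Icc 0 T))) (hψ : MemLp ψ ⊤ (volume.restrict (Icc 0 T)))
    (hK : 0 ≤ K) (hψK : ∀ᵐ τ ∂volume.restrict (Icc 0 T), ‖ψ τ‖ ≤ K) (ht : t ∈ Icc 0 T) :
    ‖volterra p φ t - volterra q ψ t‖ ≤ δ * (T ^ β / β * K) + ‖volterra p (φ - ψ) t‖ := by
  obtain ⟨ht0, htT⟩ := ht
  have hδ := hpq.nonneg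
  have hψKt := ae_restrict_of_ae_restrict_of_subset (Icc_subset_Icc_right htT) hψK
  rw [volterra_sub_volterra ha ht0 hpm hqm hp hq (memLp_restrict_Icc_of_le hφ htT)
    (memLp_restrict_Icc_of_le hψ htT), add_comm]
  grw [norm_add_le, hpq.norm_volterra_le_of_ae_norm_le hβ ht0 hψKt, htT]

theorem exists_volterraSol_stability_const {α β B T R₀ cf : ℝ} (hα : 0 < α) (hβ : 0 < β)
    (hB : 0 < B) (hT : 0 < T) (hR₀ : 0 ≤ R₀) (hcf : 0 < cf) {f : ℝ → E → E}
    (hf_lip : ∀ r > 0, ∃ lam > 0, ∀ t ∈ Icc 0 T, ∀ x y, ‖x‖ ≤ r → ‖y‖ ≤ r →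
      ‖f t x - f t y‖ ≤ lam * ‖x - y‖)
    (hf_growth : ∀ t ∈ Icc 0 T, ∀ x, ‖f t x‖ ≤ (1 + ‖x‖) * cf) :
    ∃ M > 0, ∀ (p q : ℝ → ℝ) (δ : ℝ) (x₀ : E) (x z : ℝ → E), Measurable p → Measurable q →
      HasPowerBound p B α → HasPowerBound q B α → HasPowerBound (p - q) δ β → ‖x₀‖ ≤ R₀ →
      IsVolterraSol p T f x₀ x → IsVolterraSol q T f x₀ z →
      ∀ t ∈ Icc 0 T, ‖x t - z t‖ ≤ M * δ := by
  obtain ⟨M₁, hM₁, apriori⟩ := exists_volterraSol_bound hα hB hcf hf_growth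
  set N := M₁ * (1 + R₀) with hN
  obtain ⟨lam, hlam, hlip⟩ := hf_lip N (by positivity)
  obtain ⟨M₂, hM₂, gronwall⟩ := exists_volterra_gronwall_const (E := E) T hα hB hlam
  refine ⟨M₂ * (T ^ β / β * (N * cf)), by positivity,
    fun p q δ x₀ x z hpm hqm hp hq hpq hx₀ hx hz ↦ ?_⟩
  have le_N {r : ℝ → ℝ} {v : ℝ → E} (hr : HasPowerBound r B α) (hv : IsVolterraSol r T f x₀ v)
      {t : ℝ} (ht : t ∈ Icc 0 T) : 1 + ‖v t‖ ≤ N :=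
    (apriori r x₀ v hr hv t ht).trans (by rw [hN]; gcongr)
  have hxN {t : ℝ} (ht : t ∈ Icc 0 T) := le_N hp hx ht
  have hzN {t : ℝ} (ht : t ∈ Icc 0 T) := le_N hq hz ht
  obtain ⟨φ, hφ, hφf, hx⟩ := hx
  obtain ⟨ψ, hψ, hψf, hz⟩ := hz
  have hψN : ∀ᵐ t ∂volume.restrict (Icc 0 T), ‖ψ t‖ ≤ N * cf := by
    filter_upwards [hψf, ae_restrict_mem measurableSet_Icc] with t hψt ht
    grw [hψt, hf_growth t ht, hzN ht]
  have hlip_ae : ∀ᵐ t ∂volume.restrict (Icc 0 T), ‖(φ - ψ) t‖ ≤ lam * ‖x t - z t‖ := by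
    filter_upwards [hφf, hψf, ae_restrict_mem measurableSet_Icc] with t hφt hψt ht
    rw [Pi.sub_apply, hφt, hψt]
    exact hlip t ht _ _ (by linarith [hxN ht]) (by linarith [hzN ht])
  have herror : ∀ t ∈ Icc 0 T,
      ‖x t - z t‖ ≤ δ * (T ^ β / β * (N * cf)) + ‖volterra p (φ - ψ) t‖ := fun t ht ↦ by
    rw [hx t ht, hz t ht, add_sub_add_left_eq_sub]
    exact norm_volterra_sub_volterra_le hα hβ hpm hqm hp hq hpq hφ hψ (by positivity) hψN ht
  intro t ht
  rw [mul_assoc, mul_comm _ δ]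
  exact gronwall p (φ - ψ) (fun t ↦ ‖x t - z t‖) _ _ hp
    (mul_nonneg hpq.nonneg (by positivity)) (ae_le_lpNorm_exponent_top (hφ.sub hψ)) hlip_ae
    (fun t _ ↦ norm_nonneg _) herror t ht

end VolterraEquation

section RiemannLiouville

variable {E : Type*} [NormedAddCommGroup E] [NormedSpace ℝ E]

lemma setIntegral_indicator_Ioi_eq_intervalIntegral {a b r : ℝ} (hr : r ∈ Ioc a b) (g : ℝ → E) :
    ∫ τ in Ioc a b, (Ioi r).indicator g τ = ∫ τ in r..b, g τ := by
  rw [setIntegral_indicator measurableSet_Ioi, Ioc_inter_Ioi, sup_eq_right.2 hr.1.le,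
    intervalIntegral.integral_of_le hr.2]

lemma setIntegral_indicator_Iio_eq_intervalIntegral {a b τ : ℝ} (hτ : τ ∈ Ioc a b) (g : ℝ → E) :
    ∫ r in Ioc a b, (Iio τ).indicator g r = ∫ r in a..τ, g r := by
  rw [setIntegral_indicator measurableSet_Iio, intervalIntegral.integral_of_le hτ.1.le,
    integral_Ioc_eq_integral_Ioo]
  congr 2
  ext r
  exact ⟨fun h ↦ ⟨h.1.1, h.2⟩, fun h ↦ ⟨⟨h.1, h.2.le.trans hτ.2⟩, h.2⟩⟩

theorem integral_integral_swap_triangle {F : ℝ → ℝ → E} {a b : ℝ} (hab : a ≤ b)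
    (hF : AEStronglyMeasurable (Function.uncurry F)
      ((volume.restrict (Ioc a b)).prod (volume.restrict (Ioc a b))))
    (h_slice : ∀ r ∈ Ioc a b, IntervalIntegrable (fun τ ↦ F τ r) volume r b)
    (h_norm : IntervalIntegrable (fun r ↦ ∫ τ in r..b, ‖F τ r‖) volume a b) :
    ∫ τ in a..b, ∫ r in a..τ, F τ r = ∫ r in a..b, ∫ τ in r..b, F τ r := by
  let G : ℝ → ℝ → E := fun τ r ↦ {p : ℝ × ℝ | p.2 < p.1}.indicator (Function.uncurry F) (τ, r)
  have hGm : AEStronglyMeasurable (Function.uncurry G)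
      ((volume.restrict (Ioc a b)).prod (volume.restrict (Ioc a b))) :=
    hF.indicator (measurableSet_lt measurable_snd measurable_fst)
  have hG : Integrable (Function.uncurry G)
      ((volume.restrict (Ioc a b)).prod (volume.restrict (Ioc a b))) := by
    rw [integrable_prod_iff' hGm]
    constructor
    · filter_upwards [ae_restrict_mem measurableSet_Ioc] with r hr
      change IntegrableOn ((Ioi r).indicator fun τ ↦ F τ r) (Ioc a b)
      rw [integrableOn_indicator_iff measurableSet_Ioi, inter_comm, Ioc_inter_Ioi,
        sup_eq_right.2 hr.1.le]
      exact (h_slice r hr).1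
    · refine h_norm.1.congr_fun (fun r hr ↦ ?_) measurableSet_Ioc
      simp only [← setIntegral_indicator_Ioi_eq_intervalIntegral hr,
        ← norm_indicator_eq_indicator_norm]
      rfl
  simp only [intervalIntegral.integral_of_le hab]
  calc ∫ τ in Ioc a b, ∫ r in a..τ, F τ r = ∫ τ in Ioc a b, ∫ r in Ioc a b, G τ r :=
        setIntegral_congr_fun measurableSet_Ioc fun τ hτ ↦
          (setIntegral_indicator_Iio_eq_intervalIntegral hτ (F τ)).symm
    _ = ∫ r in Ioc a b, ∫ τ in Ioc a b, G τ r := integral_integral_swap hG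
    _ = ∫ r in Ioc a b, ∫ τ in r..b, F τ r :=
        setIntegral_congr_fun measurableSet_Ioc fun r hr ↦
          setIntegral_indicator_Ioi_eq_intervalIntegral hr fun τ ↦ F τ r

lemma integral_sub_rpow_mul_rpow {a b c : ℝ} (ha : 0 < a) (hb : 0 < b) (hc : 0 < c) :
    ∫ u in (0 : ℝ)..c, (c - u) ^ (b - 1) * u ^ (a - 1)
      = Gamma a * Gamma b / Gamma (a + b) * c ^ (a + b - 1) := by
  have hbeta := Complex.betaIntegral_scaled (a : ℂ) (b : ℂ) hc
  rw [Complex.betaIntegral_eq_Gamma_mul_div _ _ (by simpa using ha) (by simpa using hb),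
    ← Complex.ofReal_add] at hbeta
  simp only [Complex.Gamma_ofReal] at hbeta
  apply Complex.ofReal_injective
  rw [← intervalIntegral.integral_ofReal]
  push_cast [Complex.ofReal_cpow hc.le]
  rw [mul_comm, ← Complex.ofReal_add, ← hbeta]
  refine intervalIntegral.integral_congr fun u hu ↦ ?_
  rw [uIcc_of_le hc.le] at hu
  push_cast [Complex.ofReal_cpow (sub_nonneg.2 hu.2), Complex.ofReal_cpow hu.1]
  ring

lemma integral_sub_rpow_mul_sub_rpow {a b r s : ℝ} (ha : 0 < a) (hb : 0 < b) (hrs : r < s) :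
    ∫ τ in r..s, (s - τ) ^ (b - 1) * (τ - r) ^ (a - 1)
      = Gamma a * Gamma b / Gamma (a + b) * (s - r) ^ (a + b - 1) := by
  have shift := intervalIntegral.integral_comp_sub_right (a := r) (b := s)
    (fun u ↦ (s - r - u) ^ (b - 1) * u ^ (a - 1)) r
  simp only [sub_sub_sub_cancel_right, sub_self] at shift
  rw [shift, integral_sub_rpow_mul_rpow ha hb (sub_pos.2 hrs)]

lemma intervalIntegrable_sub_rpow_mul_sub_rpow {a b r s : ℝ} (ha : 0 < a) (hb : 0 < b)
    (hrs : r ≤ s) :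
    IntervalIntegrable (fun τ ↦ (s - τ) ^ (b - 1) * (τ - r) ^ (a - 1)) volume r s := by
  obtain rfl | hrs := hrs.eq_or_lt
  · exact .refl
  apply intervalIntegral.intervalIntegrable_of_integral_ne_zero
  rw [integral_sub_rpow_mul_sub_rpow ha hb hrs]
  have := Gamma_pos_of_pos ha
  have := Gamma_pos_of_pos hb
  have := Gamma_pos_of_pos (add_pos ha hb)
  have := sub_pos.2 hrs
  positivity

lemma integral_norm_sub_rpow_mul_sub_rpow_smul {a b r s : ℝ} (ha : 0 < a) (hb : 0 < b)
    (hrs : r < s) (v : E) :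
    ∫ τ in r..s, ‖((s - τ) ^ (b - 1) * (τ - r) ^ (a - 1)) • v‖
      = Gamma a * Gamma b / Gamma (a + b) * ‖(s - r) ^ (a + b - 1) • v‖ := by
  rw [norm_smul, norm_of_nonneg (rpow_nonneg (sub_pos.2 hrs).le _), ← mul_assoc,
    ← integral_sub_rpow_mul_sub_rpow ha hb hrs, ← intervalIntegral.integral_mul_const]
  refine intervalIntegral.integral_congr fun τ hτ ↦ ?_
  rw [uIcc_of_le hrs.le] at hτ
  have := sub_nonneg.2 hτ.1
  have := sub_nonneg.2 hτ.2
  simp only [norm_smul]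
  rw [norm_of_nonneg (by positivity)]

lemma integral_sub_rpow_smul_integral_sub_rpow_smul [CompleteSpace E] {a b s : ℝ}
    (ha : 0 < a) (hb : 0 < b) (hs : 0 ≤ s) {φ : ℝ → E}
    (hφ : MemLp φ ⊤ (volume.restrict (Icc 0 s))) :
    ∫ τ in (0 : ℝ)..s, ∫ r in (0 : ℝ)..τ, ((s - τ) ^ (b - 1) * (τ - r) ^ (a - 1)) • φ r
      = (Gamma a * Gamma b / Gamma (a + b)) •
        ∫ r in (0 : ℝ)..s, (s - r) ^ (a + b - 1) • φ r := by
  have hpow : IntervalIntegrable (fun r ↦ (s - r) ^ (a + b - 1) • φ r) volume 0 s := by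
    have := intervalIntegrable_sub_rpow (add_pos ha hb) s
    rw [intervalIntegrable_iff_integrableOn_Icc_of_le hs] at this ⊢
    exact this.smul_of_top_left hφ
  rw [integral_integral_swap_triangle hs, ← intervalIntegral.integral_smul]
  · refine intervalIntegral.integral_congr_Ioo_of_le hs fun r hr ↦ ?_
    rw [intervalIntegral.integral_smul_const, integral_sub_rpow_mul_sub_rpow ha hb hr.2, mul_smul]
  · have hφm : AEStronglyMeasurable φ (volume.restrict (Ioc 0 s)) := by
      rw [restrict_Ioc_eq_restrict_Icc]
      exact hφ.1
    refine AEStronglyMeasurable.smul (Measurable.aestronglyMeasurable ?_) hφm.comp_snd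
    fun_prop
  · exact fun r hr ↦
      (intervalIntegrable_sub_rpow_mul_sub_rpow ha hb hr.2).smul_continuousOn continuousOn_const
  · rw [intervalIntegrable_iff_integrableOn_Ioo_of_le hs] at hpow ⊢
    exact IntegrableOn.congr_fun (hpow.norm.const_mul _) (fun r hr ↦
      (integral_norm_sub_rpow_mul_sub_rpow_smul ha hb hr.2 (φ r)).symm) measurableSet_Ioo

theorem RLint_RLint [CompleteSpace E] {a b s : ℝ} (ha : 0 < a) (hb : 0 < b) (hs : 0 ≤ s)
    {φ : ℝ → E} (hφ : MemLp φ ⊤ (volume.restrict (Icc 0 s))) :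
    RLint b (RLint a φ) s = RLint (a + b) φ s := by
  have := Gamma_pos_of_pos ha
  have := Gamma_pos_of_pos hb
  have double := integral_sub_rpow_smul_integral_sub_rpow_smul ha hb hs hφ
  simp only [mul_smul, intervalIntegral.integral_smul] at double
  unfold RLint
  simp only [smul_comm _ (Gamma a)⁻¹, intervalIntegral.integral_smul]
  rw [double, smul_smul, smul_smul]
  congr 1
  field_simp

lemma RLint_one (φ : ℝ → E) (t : ℝ) : RLint 1 φ t = ∫ τ in (0 : ℝ)..t, φ τ := by
  simp [RLint]

lemma RLderiv_eq_deriv_RLint (α : ℝ) (x : ℝ → E) : RLderiv α x = deriv (RLint (1 - α) x) := by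
  unfold RLderiv RLint
  simp only [sub_sub_cancel_left]

lemma RLint_congr {b s : ℝ} (hs : 0 ≤ s) {φ ψ : ℝ → E} (h : EqOn φ ψ (Icc 0 s)) :
    RLint b φ s = RLint b ψ s := by
  refine congrArg _ (intervalIntegral.integral_congr fun τ hτ ↦ ?_)
  rw [uIcc_of_le hs] at hτ
  simp only [h hτ]

lemma ae_restrict_Icc_mem_nhds (a b : ℝ) : ∀ᵐ t ∂volume.restrict (Icc a b), Icc a b ∈ nhds t := by
  rw [← restrict_Ioo_eq_restrict_Icc]
  filter_upwards [ae_restrict_mem measurableSet_Ioo] with t ht using Icc_mem_nhds ht.1 ht.2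

theorem ae_capDeriv_eq_of_eq_add_RLint [CompleteSpace E] {α T : ℝ} (hα : α ∈ Ioo 0 1)
    (hT : 0 ≤ T) {x₀ : E} {x φ : ℝ → E} (hφ : MemLp φ ⊤ (volume.restrict (Icc 0 T)))
    (hx : ∀ t ∈ Icc 0 T, x t = x₀ + RLint α φ t) :
    ∀ᵐ t ∂volume.restrict (Icc 0 T), CapDeriv α x t = φ t := by
  have hx0 : x 0 = x₀ := by simp [hx 0 ⟨le_rfl, hT⟩, RLint]
  have primitive : ∀ s ∈ Icc 0 T,
      RLint (1 - α) (fun τ ↦ x τ - x 0) s = ∫ τ in (0 : ℝ)..s, φ τ := fun s hs ↦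
    calc RLint (1 - α) (fun τ ↦ x τ - x 0) s = RLint (1 - α) (RLint α φ) s :=
          RLint_congr hs.1 fun τ hτ ↦ by
            rw [hx τ ⟨hτ.1, hτ.2.trans hs.2⟩, hx0, add_sub_cancel_left]
      _ = RLint (α + (1 - α)) φ s := RLint_RLint hα.1 (sub_pos.2 hα.2) hs.1
          (memLp_restrict_Icc_of_le hφ hs.2)
      _ = ∫ τ in (0 : ℝ)..s, φ τ := by rw [add_sub_cancel, RLint_one]
  have hφi : IntervalIntegrable φ volume 0 T := by
    rw [intervalIntegrable_iff_integrableOn_Icc_of_le hT]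
    exact hφ.integrable le_top
  filter_upwards [ae_restrict_of_ae hφi.ae_hasDerivAt_integral, ae_restrict_mem measurableSet_Icc,
    ae_restrict_Icc_mem_nhds 0 T] with t hderiv ht hnhds
  rw [uIcc_of_le hT] at hderiv
  rw [CapDeriv, RLderiv_eq_deriv_RLint,
    (Filter.eventuallyEq_of_mem hnhds primitive).deriv_eq]
  exact (hderiv ht 0 ⟨le_rfl, hT⟩).deriv

end RiemannLiouville

section LipschitzPrimitive

variable {E : Type*} [NormedAddCommGroup E] [NormedSpace ℝ E] {y : ℝ → E} {L : NNReal} {a b : ℝ}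

lemma ae_norm_deriv_le_of_lipschitzOnWith (hy : LipschitzOnWith L y (Icc a b)) :
    ∀ᵐ t ∂volume.restrict (Icc a b), ‖deriv y t‖ ≤ L :=
  (ae_restrict_Icc_mem_nhds a b).mono fun _ ht ↦ norm_deriv_le_of_lipschitzOn ht hy

lemma lipschitzOnWith_integral_of_ae_norm_le {g : ℝ → E}
    (hgi : IntegrableOn g (Icc a b)) (hg : ∀ᵐ t ∂volume.restrict (Icc a b), ‖g t‖ ≤ L) :
    LipschitzOnWith L (fun s ↦ ∫ τ in a..s, g τ) (Icc a b) := by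
  have integrable {s : ℝ} (hs : s ∈ Icc a b) : IntervalIntegrable g volume a s := by
    rw [intervalIntegrable_iff_integrableOn_Icc_of_le hs.1]
    exact hgi.mono_set (Icc_subset_Icc_right hs.2)
  refine LipschitzOnWith.of_dist_le_mul fun s hs r hr ↦ ?_
  rw [dist_eq_norm, intervalIntegral.integral_interval_sub_left (integrable hs) (integrable hr),
    Real.dist_eq]
  apply intervalIntegral.norm_integral_le_of_norm_le_const_ae
  filter_upwards [(ae_restrict_iff' measurableSet_Icc).1 hg] with τ hgτ hτ
  exact hgτ (ordConnected_Icc.uIcc_subset hr hs (uIoc_subset_uIcc hτ))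

variable [CompleteSpace E]

lemma memLp_top_deriv_of_lipschitzOnWith (hy : LipschitzOnWith L y (Icc a b)) :
    MemLp (deriv y) ⊤ (volume.restrict (Icc a b)) :=
  memLp_top_of_bound (aestronglyMeasurable_deriv y _) L (ae_norm_deriv_le_of_lipschitzOnWith hy)

theorem integral_deriv_eq_sub_of_lipschitzOnWith (hab : a ≤ b)
    (hy : LipschitzOnWith L y (Icc a b))
    (hd : ∀ᵐ t ∂volume.restrict (Icc a b), DifferentiableAt ℝ y t) {t : ℝ} (ht : t ∈ Icc a b) :
    ∫ τ in a..t, deriv y τ = y t - y a := by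
  have hi : IntegrableOn (deriv y) (Icc a b) :=
    (memLp_top_deriv_of_lipschitzOnWith hy).integrable le_top
  have hii : IntervalIntegrable (deriv y) volume a b := by
    rwa [intervalIntegrable_iff_integrableOn_Icc_of_le hab]
  let gap : ℝ → E := fun s ↦ y s - ∫ τ in a..s, deriv y τ
  have hgap : LipschitzOnWith (L + L) gap (uIcc a b) := by
    rw [uIcc_of_le hab]
    exact hy.sub
      (lipschitzOnWith_integral_of_ae_norm_le hi (ae_norm_deriv_le_of_lipschitzOnWith hy))
  have hgap' : ∀ᵐ s, s ∈ uIcc a b → HasDerivAt gap 0 s := by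
    rw [ae_restrict_iff' measurableSet_Icc, ← uIcc_of_le hab] at hd
    filter_upwards [hd, hii.ae_hasDerivAt_integral] with s hds hIs hs
    simpa using (hds hs).hasDerivAt.fun_sub (hIs hs a left_mem_uIcc)
  obtain ⟨C, hC⟩ := hgap.absolutelyContinuousOnInterval.const_of_ae_hasDerivAt_zero hgap'
  rw [uIcc_of_le hab] at hC
  have hCa : y a = C := by simpa [gap] using hC a ⟨le_rfl, hab⟩
  rw [hCa, ← hC t ht, sub_sub_cancel]

end LipschitzPrimitive

section GrunwaldLetnikov

variable {E : Type*} [NormedAddCommGroup E] [NormedSpace ℝ E] {α h t : ℝ}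

lemma mem_range_floor_div_add_one {u : ℝ} (hh : 0 < h) (hu : 0 ≤ u) {j : ℕ} :
    j ∈ Finset.range (⌊u / h⌋₊ + 1) ↔ j * h ≤ u := by
  rw [Finset.mem_range, Nat.lt_succ_iff, Nat.le_floor_iff (by positivity), le_div_iff₀ hh]

lemma glKernel_smul_eq_sum_indicator (hh : 0 < h) (ψ : ℝ → E) {τ : ℝ} (hτ : τ ∈ Icc 0 t) :
    glKernel α h (t - τ) • ψ τ = h ^ (α - 1) • ∑ j ∈ Finset.range (⌊t / h⌋₊ + 1),
      ((-1 : ℝ) ^ j * binomR (1 - α) j) • {σ | σ ≤ t - j * h}.indicator ψ τ := by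
  have hrange : Finset.range (⌊(t - τ) / h⌋₊ + 1)
      = {j ∈ Finset.range (⌊t / h⌋₊ + 1) | τ ≤ t - (j : ℕ) * h} := by
    ext j
    rw [Finset.mem_filter, mem_range_floor_div_add_one hh (sub_nonneg.2 hτ.2),
      mem_range_floor_div_add_one hh (hτ.1.trans hτ.2)]
    constructor
    · exact fun hj ↦ ⟨by linarith [hτ.1], by linarith⟩
    · exact fun hj ↦ by linarith [hj.2]
  simp only [glKernel, glPartialSum, hrange, mul_smul, Finset.sum_filter, Finset.sum_smul,
    ite_smul, zero_smul, indicator_apply, mem_ofPred_eq, smul_ite, smul_zero]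

theorem smul_GLdiff_eq_volterra (hh : 0 < h) (ht : 0 ≤ t) {y ψ : ℝ → E}
    (hψ : IntervalIntegrable ψ volume 0 t) (hy : ∀ s ∈ Icc 0 t, y s = ∫ τ in (0 : ℝ)..s, ψ τ) :
    h ^ (α - 1) • GLdiff (1 - α) h y t = volterra (glKernel α h) ψ t := by
  have hpiece (j : ℕ) (hj : j ∈ Finset.range (⌊t / h⌋₊ + 1)) :
      ∫ τ in (0 : ℝ)..t, {σ | σ ≤ t - j * h}.indicator ψ τ = y (t - j * h) := by
    have hjh : (j : ℝ) * h ≤ t := (mem_range_floor_div_add_one hh ht).1 hj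
    have hmem : t - j * h ∈ Icc 0 t := ⟨by linarith, sub_le_self _ (by positivity)⟩
    rw [intervalIntegral.integral_indicator hmem, hy _ hmem]
  have hint (j : ℕ) : IntervalIntegrable (fun τ ↦ ((-1 : ℝ) ^ j * binomR (1 - α) j) •
      {σ | σ ≤ t - j * h}.indicator ψ τ) volume 0 t := by
    rw [intervalIntegrable_iff] at hψ ⊢
    exact (hψ.indicator measurableSet_Iic).smul _
  have hvolterra : volterra (glKernel α h) ψ t = ∫ τ in (0 : ℝ)..t, h ^ (α - 1) •
      ∑ j ∈ Finset.range (⌊t / h⌋₊ + 1), ((-1 : ℝ) ^ j * binomR (1 - α) j) •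
        {σ | σ ≤ t - j * h}.indicator ψ τ :=
    intervalIntegral.integral_congr fun τ hτ ↦
      glKernel_smul_eq_sum_indicator hh ψ (by rwa [uIcc_of_le ht] at hτ)
  rw [hvolterra, intervalIntegral.integral_smul,
    intervalIntegral.integral_finsetSum fun j _ ↦ hint j, GLdiff]
  congr 1
  exact Finset.sum_congr rfl fun j hj ↦ by rw [intervalIntegral.integral_smul, hpiece j hj]

end GrunwaldLetnikov

section Convergence

variable {E : Type*} [NormedAddCommGroup E] [NormedSpace ℝ E]

/-- `IsCaputoSol` with values in an arbitrary real normed space; `x` being a fractional integral of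
an essentially bounded function is expressed through `MemLp`. -/
def IsCaputoSolution (α T : ℝ) (f : ℝ → E → E) (x₀ : E) (x : ℝ → E) : Prop :=
  (∃ φ : ℝ → E, MemLp φ ⊤ (volume.restrict (Icc 0 T)) ∧
    ∀ t ∈ Icc 0 T, x t = x₀ + RLint α φ t) ∧
  ∀ᵐ t ∂volume.restrict (Icc 0 T), CapDeriv α x t = f t (x t)

/-- `IsApproxSol` with values in an arbitrary real normed space. -/
def IsGrunwaldLetnikovSolution (α T h : ℝ) (f : ℝ → E → E) (x₀ : E) (y : ℝ → E) : Prop :=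
  (∃ L : NNReal, LipschitzOnWith L y (Icc 0 T)) ∧ y 0 = 0 ∧
  ∀ᵐ t ∂volume.restrict (Icc 0 T),
    HasDerivAt y (f t (x₀ + h ^ (α - 1) • GLdiff (1 - α) h y t)) t

lemma IsCaputoSol.isCaputoSolution {α T : ℝ} {n : ℕ} {f : ℝ → Evec n → Evec n} {x₀ : Evec n}
    {x : ℝ → Evec n} (hx : IsCaputoSol α T f x₀ x) : IsCaputoSolution α T f x₀ x := by
  obtain ⟨⟨φ, hφ, ⟨C, hC⟩, hxφ⟩, hcap⟩ := hx
  exact ⟨⟨φ, memLp_top_of_bound hφ.aestronglyMeasurable C hC, hxφ⟩, hcap⟩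

variable [CompleteSpace E] {α T h : ℝ} {f : ℝ → E → E} {x₀ : E}

lemma IsCaputoSolution.isVolterraSol {x : ℝ → E} (hα : α ∈ Ioo 0 1) (hT : 0 ≤ T)
    (hx : IsCaputoSolution α T f x₀ x) : IsVolterraSol (rlKernel α) T f x₀ x := by
  obtain ⟨⟨φ, hφ, hxφ⟩, hcap⟩ := hx
  refine ⟨φ, hφ, ?_, RLint_eq_volterra α φ ▸ hxφ⟩
  filter_upwards [hcap, ae_capDeriv_eq_of_eq_add_RLint hα hT hφ hxφ] with t hf hφt
  rw [← hφt, hf]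

lemma IsGrunwaldLetnikovSolution.isVolterraSol {y : ℝ → E} (hh : 0 < h) (hT : 0 ≤ T)
    (hy : IsGrunwaldLetnikovSolution α T h f x₀ y) :
    IsVolterraSol (glKernel α h) T f x₀
      fun t ↦ x₀ + h ^ (α - 1) • GLdiff (1 - α) h y t := by
  obtain ⟨⟨L, hL⟩, hy0, hderiv⟩ := hy
  have hy' := memLp_top_deriv_of_lipschitzOnWith hL
  refine ⟨deriv y, hy', hderiv.mono fun t ht ↦ ht.deriv, fun t ht ↦ ?_⟩
  have hint : IntervalIntegrable (deriv y) volume 0 t := by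
    rw [intervalIntegrable_iff_integrableOn_Icc_of_le ht.1]
    exact (memLp_restrict_Icc_of_le hy' ht.2).integrable le_top
  refine congrArg (x₀ + ·) (smul_GLdiff_eq_volterra hh ht.1 hint fun s hs ↦ ?_)
  rw [integral_deriv_eq_sub_of_lipschitzOnWith hT hL (hderiv.mono fun _ h ↦ h.differentiableAt)
    ⟨hs.1, hs.2.trans ht.2⟩, hy0, sub_zero]

theorem exists_norm_sub_smul_GLdiff_le_mul_rpow {β R₀ cf : ℝ} (hα : α ∈ Ioo 0 1)
    (hβ : β ∈ Ioc 0 α) (hT : 0 < T) (hR₀ : 0 ≤ R₀) (hcf : 0 < cf)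
    (hf_lip : ∀ r > 0, ∃ lam > 0, ∀ t ∈ Icc 0 T, ∀ x y, ‖x‖ ≤ r → ‖y‖ ≤ r →
      ‖f t x - f t y‖ ≤ lam * ‖x - y‖)
    (hf_growth : ∀ t ∈ Icc 0 T, ∀ x, ‖f t x‖ ≤ (1 + ‖x‖) * cf) :
    ∃ M > 0, ∀ (h : ℝ) (x₀ : E) (x y : ℝ → E), 0 < h → ‖x₀‖ ≤ R₀ →
      IsCaputoSolution α T f x₀ x → IsGrunwaldLetnikovSolution α T h f x₀ y →
      ∀ t ∈ Icc 0 T, ‖x t - x₀ - h ^ (α - 1) • GLdiff (1 - α) h y t‖ ≤ M * h ^ (α - β) := by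
  have hΓ := Gamma_pos_of_pos hα.1
  obtain ⟨M, hM, stability⟩ := exists_volterraSol_stability_const hα.1 hβ.1
    (by positivity : 0 < (Gamma α + 2) / Gamma α) hT hR₀ hcf hf_lip hf_growth
  refine ⟨M * ((Gamma α + 4) / Gamma α), by positivity, fun h x₀ x y hh hx₀ hx hy t ht ↦ ?_⟩
  have hrl : HasPowerBound (rlKernel α) ((Gamma α + 2) / Gamma α) α :=
    (hasPowerBound_rlKernel hα.1).mono (by rw [inv_eq_one_div]; gcongr; linarith)
  rw [sub_sub, mul_assoc]
  exact stability (rlKernel α) (glKernel α h) _ x₀ x _ (measurable_rlKernel α)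
    (measurable_glKernel α h) hrl (hasPowerBound_glKernel hα hh)
    (hasPowerBound_rlKernel_sub_glKernel hα ⟨hβ.1.le, hβ.2⟩ hh) hx₀
    (hx.isVolterraSol hα hT.le) (hy.isVolterraSol hh hT.le) t ht

theorem stmt12_general {R₀ cf : ℝ} (hα : α ∈ Ioo 0 1) (hT : 0 < T) (hR₀ : 0 ≤ R₀) (hcf : 0 < cf)
    (hf_lip : ∀ r > 0, ∃ lam > 0, ∀ t ∈ Icc 0 T, ∀ x y, ‖x‖ ≤ r → ‖y‖ ≤ r →
      ‖f t x - f t y‖ ≤ lam * ‖x - y‖)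
    (hf_growth : ∀ t ∈ Icc 0 T, ∀ x, ‖f t x‖ ≤ (1 + ‖x‖) * cf) :
    ∀ ε > 0, ∃ hstar > 0, ∀ x₀ : E, ‖x₀‖ ≤ R₀ → ∀ h ∈ Ioc 0 hstar,
      ∀ x y : ℝ → E, IsCaputoSolution α T f x₀ x → IsGrunwaldLetnikovSolution α T h f x₀ y →
      ∀ t ∈ Icc 0 T, ‖x t - x₀ - h ^ (α - 1) • GLdiff (1 - α) h y t‖ ≤ ε := fun ε hε ↦ by
  have hα0 := hα.1
  obtain ⟨M, hM, rate⟩ := exists_norm_sub_smul_GLdiff_le_mul_rpow (β := α / 2) hα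
    ⟨half_pos hα0, half_le_self hα0.le⟩ hT hR₀ hcf hf_lip hf_growth
  refine ⟨(ε / M) ^ (α / 2)⁻¹, by positivity, fun x₀ hx₀ h ⟨hh, hhstar⟩ x y hx hy t ht ↦ ?_⟩
  calc ‖x t - x₀ - h ^ (α - 1) • GLdiff (1 - α) h y t‖ ≤ M * h ^ (α - α / 2) :=
        rate h x₀ x y hh hx₀ hx hy t ht
    _ ≤ M * ((ε / M) ^ (α / 2)⁻¹) ^ (α / 2) := by rw [sub_half]; gcongr
    _ = ε := by
        rw [rpow_inv_rpow (by positivity) (by positivity)]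
        field_simp

end Convergence

theorem stmt12 (α T R₀ : ℝ) (hα : α ∈ Ioo (0:ℝ) 1) (hT : 0 < T) (hR₀ : 0 < R₀) (n : ℕ)
    (f : ℝ → Evec n → Evec n)
    (hf1 : ∀ x : Evec n, Measurable fun t => f t x)
    (hf2 : ∀ r > (0:ℝ), ∃ lam > (0:ℝ), ∀ t ∈ Icc (0:ℝ) T, ∀ x y : Evec n,
      ‖x‖ ≤ r → ‖y‖ ≤ r → ‖f t x - f t y‖ ≤ lam * ‖x - y‖)
    (cf : ℝ) (hcf : 0 < cf)
    (hf3 : ∀ t ∈ Icc (0:ℝ) T, ∀ x : Evec n, ‖f t x‖ ≤ (1 + ‖x‖) * cf) :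
    ∀ ε > (0:ℝ), ∃ hstar > (0:ℝ), ∀ x₀ : Evec n, ‖x₀‖ ≤ R₀ → ∀ h ∈ Ioc (0:ℝ) hstar,
      ∀ x y : ℝ → Evec n, IsCaputoSol α T f x₀ x → IsApproxSol α T h f x₀ y →
      ∀ t ∈ Icc (0:ℝ) T,
        ‖x t - x₀ - ((h ^ (α - 1) : ℝ)) • GLdiff (1 - α) h y t‖ ≤ ε := by
  intro ε hε
  obtain ⟨hstar, hpos, close⟩ := stmt12_general hα hT hR₀.le hcf hf2 hf3 ε hε
  exact ⟨hstar, hpos, fun x₀ hx₀ h hh x y hx ↦ close x₀ hx₀ h hh x y hx.isCaputoSolution⟩
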